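/- arXiv:1103.1310 — 10 statements merged into one kernel-verified Lean document; each statement's English description precedes it below -/
import Mathlib

section
/- Let V be a real inner product space, let n ≥ 2, let x_1, …, x_n be linearly independent vectors in V, and let p be a real number with -1/(n-1) < p < 1. Then there exist vectors z_1, …, z_n in V such that span{z_1, …, z_i} = span{x_1, …, x_i} for every 1 ≤ i ≤ n, ‖z_i‖ = 1 for all 1 ≤ i ≤ n, and ⟪z_i, z_j⟫ = p for all 1 ≤ i, j ≤ n with i ≠ j. -/
open scoped RealInnerProductSpace

/-- Entries of the triangular factor of the matrix with 1 on the diagonal and p elsewhere. -/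
noncomputable def gspL (a b : ℕ → ℝ) (i k : ℕ) : ℝ :=
  if k = i then b k else if k < i then a k else 0

lemma gspL_sum (a b : ℕ → ℝ) (n i j : ℕ) (hi : i < n) (hij : i ≤ j) :
    ∑ k ∈ Finset.range n, gspL a b i k * gspL a b j k
      = ∑ k ∈ Finset.range i, a k ^ 2 + b i * gspL a b j i := by
  have hsub : Finset.range (i + 1) ⊆ Finset.range n := by
    intro k hk
    simp only [Finset.mem_range] at *
    omega
  rw [← Finset.sum_subset hsub, Finset.sum_range_succ]
  · congr 1
    · apply Finset.sum_congr rfl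
      intro k hk
      have hk' := Finset.mem_range.1 hk
      have h1 : k ≠ i := by omega
      have h2 : k ≠ j := by omega
      have h3 : k < j := by omega
      simp [gspL, h1, h2, h3, hk', sq]
    · simp [gspL]
  · intro k _ hk
    simp only [Finset.mem_range] at hk
    have h1 : k ≠ i := by omega
    have h2 : ¬ k < i := by omega
    simp [gspL, h1, h2]

lemma gsp_coeffs (n : ℕ) (hn : 2 ≤ n) (p : ℝ) (hp1 : -(1 / ((n : ℝ) - 1)) < p) (hp2 : p < 1) :
    ∃ a b : ℕ → ℝ, ∀ i < n, 0 < b i ∧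
      ∑ k ∈ Finset.range i, a k ^ 2 + b i * b i = 1 ∧
      ∑ k ∈ Finset.range i, a k ^ 2 + b i * a i = p := by
  have hn' : (2 : ℝ) ≤ n := by exact_mod_cast hn
  have hD : ∀ i : ℕ, i ≤ n → 0 < 1 + ((i : ℝ) - 1) * p := by
    intro i hi
    have hi' : (i : ℝ) ≤ n := by exact_mod_cast hi
    have hi0 : (0 : ℝ) ≤ i := Nat.cast_nonneg i
    have h1 : 0 < 1 + ((n : ℝ) - 1) * p := by
      have hpos : (0 : ℝ) < n - 1 := by linarith
      have := mul_lt_mul_of_pos_left hp1 hpos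
      have h2 : ((n : ℝ) - 1) * -(1 / ((n : ℝ) - 1)) = -1 := by field_simp
      linarith
    rcases le_total 0 p with h | h
    · nlinarith
    · nlinarith
  let s : ℕ → ℝ := fun i => i * p ^ 2 / (1 + ((i : ℝ) - 1) * p)
  let b : ℕ → ℝ := fun i => Real.sqrt (1 - s i)
  let a : ℕ → ℝ := fun i => (p - s i) / b i
  have hs1 : ∀ i < n, 0 < 1 - s i := by
    intro i hi
    have h0 := hD i hi.le
    have h1 := hD (i + 1) hi
    push_cast at h1
    have : 1 - s i = (1 - p) * (1 + ((i : ℝ) + 1 - 1) * p) / (1 + ((i : ℝ) - 1) * p) := by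
      simp only [s]
      rw [eq_div_iff h0.ne', sub_mul, div_mul_cancel₀ _ h0.ne']
      ring
    rw [this]
    exact div_pos (mul_pos (by linarith) h1) h0
  have hb : ∀ i < n, 0 < b i := fun i hi => Real.sqrt_pos.2 (hs1 i hi)
  have hbb : ∀ i < n, b i * b i = 1 - s i := fun i hi => Real.mul_self_sqrt (hs1 i hi).le
  have hsum : ∀ i < n, ∑ k ∈ Finset.range i, a k ^ 2 = s i := by
    intro i
    induction i with
    | zero => intro _; simp [s]
    | succ i ih =>
      intro hi
      have hi' : i < n := by omega
      rw [Finset.sum_range_succ, ih hi']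
      have h2 : a i ^ 2 = (p - s i) ^ 2 / (1 - s i) := by
        rw [← hbb i hi', ← sq, ← div_pow]
      have h0 := hD i hi'.le
      have h1 := hD (i + 1) hi'
      push_cast at h1
      have e1 : 1 - s i = (1 - p) * (1 + (i : ℝ) * p) / (1 + ((i : ℝ) - 1) * p) := by
        simp only [s]
        rw [eq_div_iff h0.ne', sub_mul, div_mul_cancel₀ _ h0.ne']
        ring
      have e2 : p - s i = (1 - p) * p / (1 + ((i : ℝ) - 1) * p) := by
        simp only [s]
        rw [eq_div_iff h0.ne', sub_mul, div_mul_cancel₀ _ h0.ne']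
        ring
      have h1' : 1 + (i : ℝ) * p ≠ 0 := by
        intro h; linarith
      have hp : 1 - p ≠ 0 := by linarith
      have e3 : s (i + 1) = (i + 1) * p ^ 2 / (1 + (i : ℝ) * p) := by
        simp [s]
      rw [h2, e1, e2, e3]
      simp only [s]
      have h0' := h0.ne'
      generalize hd : 1 + ((i : ℝ) - 1) * p = d at *
      have : 1 + (i : ℝ) * p = d + p := by rw [← hd]; ring
      rw [this] at h1' ⊢
      field_simp
      rw [← hd]
      ring
  refine ⟨a, b, fun i hi => ⟨hb i hi, ?_, ?_⟩⟩
  · rw [hsum i hi, hbb i hi]; ring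
  · rw [hsum i hi]
    have := (hb i hi).ne'
    simp only [a]
    field_simp
    ring

theorem gram_schmidt_p_exists
    {V : Type*} [NormedAddCommGroup V] [InnerProductSpace ℝ V]
    (n : ℕ) (hn : 2 ≤ n) (x : Fin n → V) (hx : LinearIndependent ℝ x)
    (p : ℝ) (hp1 : -(1 / ((n : ℝ) - 1)) < p) (hp2 : p < 1) :
    ∃ z : Fin n → V,
      (∀ i : Fin n,
        Submodule.span ℝ (z '' Set.Iic i) = Submodule.span ℝ (x '' Set.Iic i)) ∧
      (∀ i : Fin n, ‖z i‖ = 1) ∧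
      (∀ i j : Fin n, i ≠ j → ⟪z i, z j⟫ = p) := by
  obtain ⟨a, b, hab⟩ := gsp_coeffs n hn p hp1 hp2
  obtain ⟨e, he, hspan⟩ : ∃ e : Fin n → V, Orthonormal ℝ e ∧ ∀ i : Fin n,
      Submodule.span ℝ (e '' Set.Iic i) = Submodule.span ℝ (x '' Set.Iic i) :=
    ⟨InnerProductSpace.gramSchmidtNormed ℝ x,
      InnerProductSpace.gramSchmidtNormed_orthonormal hx, fun i => by
        rw [InnerProductSpace.span_gramSchmidtNormed, InnerProductSpace.span_gramSchmidt_Iic]⟩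
  let z : Fin n → V := fun i => ∑ k : Fin n, gspL a b i k • e k
  have hinner : ∀ i j : Fin n, i ≤ j →
      ⟪z i, z j⟫ = ∑ k ∈ Finset.range i, a k ^ 2 + b i * gspL a b j i := by
    intro i j hij
    rw [← gspL_sum a b n i j i.2 hij, ← Fin.sum_univ_eq_sum_range
      (fun k => gspL a b i k * gspL a b j k)]
    simp only [z]
    rw [he.inner_sum]
    simp
  have hlt : ∀ i j : Fin n, i < j → ⟪z i, z j⟫ = p := by
    intro i j hij
    rw [hinner i j hij.le]
    have h1 : (i : ℕ) < j := hij
    have h2 : (i : ℕ) ≠ j := by omega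
    simpa [gspL, h1, h2] using (hab i i.2).2.2
  have hz : ∀ i : Fin n, z i = b i • e i + ∑ k ∈ Finset.univ.erase i, gspL a b i k • e k := by
    intro i
    simp only [z]
    rw [← Finset.add_sum_erase _ _ (Finset.mem_univ i)]
    simp [gspL]
  refine ⟨z, fun i => ?_, fun i => ?_, fun i j hij => ?_⟩
  · rw [← hspan i]
    apply le_antisymm
    · rw [Submodule.span_le]
      rintro _ ⟨j, hj, rfl⟩
      refine Submodule.sum_mem _ fun k _ => ?_
      by_cases hk : k ≤ j
      · exact Submodule.smul_mem _ _ (Submodule.subset_span ⟨k, le_trans hk hj, rfl⟩)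
      · have h1 : (k : ℕ) ≠ j := fun h => hk (Fin.ext h).le
        have h2 : ¬ (k : ℕ) < j := fun h => hk (le_of_lt h)
        simp [gspL, h1, h2]
    · rw [Submodule.span_le]
      rintro _ ⟨j, hj, rfl⟩
      induction j using WellFoundedLT.induction with
      | ind j ih =>
        have hb := (hab j j.2).1.ne'
        have h : e j = (b j)⁻¹ • (z j - ∑ k ∈ Finset.univ.erase j, gspL a b j k • e k) := by
          rw [hz j, add_sub_cancel_right, smul_smul, inv_mul_cancel₀ hb, one_smul]
        rw [h]
        refine Submodule.smul_mem _ _ (Submodule.sub_mem _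
          (Submodule.subset_span ⟨j, hj, rfl⟩) (Submodule.sum_mem _ fun k hk => ?_))
        have hkj := Finset.ne_of_mem_erase hk
        by_cases hk' : k < j
        · exact Submodule.smul_mem _ _ (ih k hk' (le_trans hk'.le hj))
        · have h1 : (k : ℕ) ≠ j := fun h => hkj (Fin.ext h)
          have h2 : ¬ (k : ℕ) < j := fun h => hk' h
          simp [gspL, h1, h2]
  · have h : ⟪z i, z i⟫ = 1 := by
      rw [hinner i i le_rfl]
      simpa [gspL] using (hab i i.2).2.1
    rw [real_inner_self_eq_norm_sq] at h
    nlinarith [norm_nonneg (z i)]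
  · rcases lt_or_gt_of_ne hij with h | h
    · exact hlt i j h
    · rw [real_inner_comm]; exact hlt j i h
end

section
/- Let V be a real inner product space, let (x_i)_{i=1}^∞ be a sequence of vectors in V that is linearly independent (every finite subfamily is linearly independent), and let p be a real number with 0 ≤ p < 1. Then there exists a sequence (z_i)_{i=1}^∞ in V such that span{z_1, …, z_i} = span{x_1, …, x_i} for every i ≥ 1, ‖z_i‖ = 1 for all i ≥ 1, and ⟪z_i, z_j⟫ = p for all i ≠ j. -/
open scoped RealInnerProductSpace

theorem gram_schmidt_p_exists_infinite
    {V : Type*} [NormedAddCommGroup V] [InnerProductSpace ℝ V]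
    (x : ℕ → V) (hx : LinearIndependent ℝ x)
    (p : ℝ) (hp1 : 0 ≤ p) (hp2 : p < 1) :
    ∃ z : ℕ → V,
      (∀ i : ℕ,
        Submodule.span ℝ (z '' Set.Iic i) = Submodule.span ℝ (x '' Set.Iic i)) ∧
      (∀ i : ℕ, ‖z i‖ = 1) ∧
      (∀ i j : ℕ, i ≠ j → ⟪z i, z j⟫ = p) := by
  obtain ⟨e, he, hspan⟩ : ∃ e : ℕ → V, Orthonormal ℝ e ∧ ∀ i : ℕ,
      Submodule.span ℝ (e '' Set.Iic i) = Submodule.span ℝ (x '' Set.Iic i) :=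
    ⟨InnerProductSpace.gramSchmidtNormed ℝ x,
      InnerProductSpace.gramSchmidtNormed_orthonormal hx, fun i => by
        rw [InnerProductSpace.span_gramSchmidtNormed, InnerProductSpace.span_gramSchmidt_Iic]⟩
  obtain ⟨s, hs0, hs⟩ : ∃ s : ℕ → ℝ, s 0 = 0 ∧
      ∀ n, s (n + 1) = s n + (p - s n) ^ 2 / (1 - s n) :=
    ⟨fun n => Nat.rec 0 (fun _ t => t + (p - t) ^ 2 / (1 - t)) n, rfl, fun _ => rfl⟩
  have hsp : ∀ n, s n ≤ p := by
    intro n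
    induction n with
    | zero => rw [hs0]; exact hp1
    | succ n ih =>
      have h1 : 0 < 1 - s n := by linarith
      have h2 : (p - s n) ^ 2 / (1 - s n) ≤ p - s n := by
        rw [div_le_iff₀ h1]
        nlinarith
      rw [hs]; linarith
  have hpos : ∀ n, 0 < 1 - s n := fun n => by linarith [hsp n]
  obtain ⟨b, hb⟩ : ∃ b : ℕ → ℝ, ∀ n, b n = √(1 - s n) := ⟨_, fun _ => rfl⟩
  have hb0 : ∀ n, b n ≠ 0 := fun n => by
    rw [hb]; exact (Real.sqrt_pos.2 (hpos n)).ne'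
  have hbsq : ∀ n, b n * b n = 1 - s n := fun n => by
    rw [hb]; exact Real.mul_self_sqrt (hpos n).le
  obtain ⟨a, ha⟩ : ∃ a : ℕ → ℝ, ∀ n, a n = (p - s n) / b n := ⟨_, fun _ => rfl⟩
  have hab : ∀ n, b n * a n = p - s n := fun n => by
    rw [ha]; field_simp [hb0 n]
  have hsa : ∀ n, s (n + 1) = s n + a n * a n := fun n => by
    rw [hs, ha, div_mul_div_comm, hbsq, sq]
  obtain ⟨c, hc0, hc⟩ : ∃ c : ℕ → V, c 0 = 0 ∧ ∀ n, c (n + 1) = c n + a n • e n :=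
    ⟨fun n => ∑ k ∈ Finset.range n, a k • e k, by simp, fun n => by
      simp [Finset.sum_range_succ]⟩
  have hee : ∀ i j, ⟪e i, e j⟫ = if i = j then (1 : ℝ) else 0 :=
    orthonormal_iff_ite.1 he
  have hec : ∀ m n, ⟪e m, c n⟫ = if m < n then a m else 0 := by
    intro m n
    induction n with
    | zero => simp [hc0]
    | succ n ih =>
      rw [hc, inner_add_right, inner_smul_right, ih, hee]
      rcases lt_trichotomy m n with h | h | h
      · simp [h, h.ne, Nat.lt_succ_of_lt h]
      · simp [h]
      · have : ¬ m < n + 1 := by omega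
        simp [h.not_gt, h.ne', this]
  have hcc : ∀ m n, m ≤ n → ⟪c m, c n⟫ = s m := by
    intro m
    induction m with
    | zero => intro n _; simp [hc0, hs0]
    | succ m ih =>
      intro n hn
      have h : m < n := hn
      rw [hc, inner_add_left, real_inner_smul_left, ih n h.le, hec, hsa]
      simp [h]
  have hlt : ∀ i j, i < j → ⟪c i + b i • e i, c j + b j • e j⟫ = p := by
    intro i j h
    rw [inner_add_left, inner_add_right, inner_add_right, inner_smul_right, inner_smul_right,
      real_inner_smul_left, real_inner_smul_left, hcc i j h.le, real_inner_comm, hec, hec, hee]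
    simp [h, h.ne, h.not_gt, hab]
  have hcmem : ∀ (S : Submodule ℝ V) n, (∀ k < n, e k ∈ S) → c n ∈ S := by
    intro S n
    induction n with
    | zero => intro _; rw [hc0]; exact S.zero_mem
    | succ n ih =>
      intro h
      rw [hc]
      exact S.add_mem (ih fun k hk => h k (by omega)) (S.smul_mem _ (h n (by omega)))
  refine ⟨fun n => c n + b n • e n, fun i => ?_, fun i => ?_, fun i j hij => ?_⟩
  · rw [← hspan]
    apply le_antisymm
    · rw [Submodule.span_le]
      rintro _ ⟨n, hn, rfl⟩
      have hn' : n ≤ i := hn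
      have hk : ∀ k ≤ n, e k ∈ Submodule.span ℝ (e '' Set.Iic i) := fun k hk =>
        Submodule.subset_span ⟨k, hk.trans hn', rfl⟩
      exact Submodule.add_mem _ (hcmem _ n fun k h => hk k h.le)
        (Submodule.smul_mem _ _ (hk n le_rfl))
    · rw [Submodule.span_le]
      rintro _ ⟨n, hn, rfl⟩
      have hn' : n ≤ i := hn
      clear hn
      induction n using Nat.strong_induction_on with
      | _ n ih =>
        set S := Submodule.span ℝ ((fun n => c n + b n • e n) '' Set.Iic i) with hS
        have h1 : c n ∈ S := hcmem S n fun k hk => ih k hk (by omega)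
        have h2 : c n + b n • e n ∈ S := Submodule.subset_span ⟨n, hn', rfl⟩
        have h3 : b n • e n ∈ S := (S.add_mem_iff_right h1).1 h2
        exact (S.smul_mem_iff (hb0 n)).1 h3
  · have h : ⟪c i + b i • e i, c i + b i • e i⟫ = 1 := by
      rw [inner_add_left, inner_add_right, inner_add_right, inner_smul_right, inner_smul_right,
        real_inner_smul_left, real_inner_smul_left, hcc i i le_rfl, real_inner_comm, hec, hee]
      simp [hbsq]
    rw [real_inner_self_eq_norm_sq] at h
    exact (pow_eq_one_iff_of_nonneg (norm_nonneg _) two_ne_zero).1 h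
  · rcases lt_or_gt_of_ne hij with h | h
    · exact hlt i j h
    · rw [real_inner_comm]; exact hlt j i h
end

section
/- Let V be a real inner product space, let n ≥ 2, let x_1, …, x_n be linearly independent vectors in V, and let d be a real number with 0 < d < √(2n/(n-1)). Then there exist vectors z_1, …, z_n in V such that span{z_1, …, z_i} = span{x_1, …, x_i} for every 1 ≤ i ≤ n, ‖z_i‖ = 1 for all 1 ≤ i ≤ n, and ‖z_i - z_j‖ = d for all i ≠ j. -/
theorem gram_aux_sum
    {V : Type*} [NormedAddCommGroup V] [InnerProductSpace ℝ V]
    (n : ℕ) (e : ℕ → V)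
    (he : ∀ k l, k < n → l < n → inner ℝ (e k) (e l) = if k = l then (1 : ℝ) else 0)
    (b : ℕ → ℝ) (k : ℕ) (hk : k < n) (j : ℕ) (hj : j ≤ n) :
    inner ℝ (e k) (∑ l ∈ Finset.range j, b l • e l) = if k < j then b k else 0 := by
  rw [inner_sum]
  have : ∀ l ∈ Finset.range j, inner ℝ (e k) (b l • e l) = if k = l then b l else 0 := by
    intro l hl
    rw [Finset.mem_range] at hl
    rw [inner_smul_right, he k l hk (by omega)]
    split_ifs <;> simp
  rw [Finset.sum_congr rfl this, Finset.sum_ite_eq]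
  simp

theorem gram_aux
    {V : Type*} [NormedAddCommGroup V] [InnerProductSpace ℝ V]
    (n : ℕ) (e : ℕ → V)
    (he : ∀ k l, k < n → l < n → inner ℝ (e k) (e l) = if k = l then (1 : ℝ) else 0)
    (c : ℝ) (hc1 : c < 1) (hc : ∀ k : ℕ, k ≤ n → 0 < 1 + ((k : ℝ) - 1) * c) :
    ∃ a b : ℕ → ℝ, (∀ k < n, a k ≠ 0) ∧
      ∀ i j, i ≤ j → j < n →
        inner ℝ (a i • e i + ∑ l ∈ Finset.range i, b l • e l)
          (a j • e j + ∑ l ∈ Finset.range j, b l • e l) = if i = j then 1 else c := by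
  set D : ℕ → ℝ := fun k => 1 + ((k : ℝ) - 1) * c with hD
  have hDs : ∀ k, D (k + 1) = D k + c := by intro k; simp only [hD]; push_cast; ring
  have hpos : ∀ k, k < n → 0 < (1 - c) * D (k + 1) / D k := by
    intro k hk
    have h1 := hc k hk.le
    have h2 := hc (k + 1) hk
    have h3 : 0 < 1 - c := by linarith
    exact div_pos (mul_pos h3 h2) h1
  set a : ℕ → ℝ := fun k => Real.sqrt ((1 - c) * D (k + 1) / D k) with ha
  have ha2 : ∀ k, k < n → a k * a k = (1 - c) * D (k + 1) / D k := fun k hk =>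
    Real.mul_self_sqrt (hpos k hk).le
  have ha0 : ∀ k, k < n → a k ≠ 0 := fun k hk => (Real.sqrt_pos.2 (hpos k hk)).ne'
  set b : ℕ → ℝ := fun k => c * (1 - c) / (D k * a k) with hb
  have hab : ∀ k, k < n → a k * b k = c * (1 - c) / D k := by
    intro k hk
    have h1 := (hc k hk.le).ne'
    have h2 := ha0 k hk
    change D k ≠ 0 at h1
    simp only [hb]
    field_simp
  have hbb : ∀ k, k < n → b k * b k = c ^ 2 * (1 - c) / (D k * D (k + 1)) := by
    intro k hk
    have h1 : D k ≠ 0 := (hc k hk.le).ne'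
    have h2 : D (k + 1) ≠ 0 := (hc (k + 1) hk).ne'
    have h3 : 1 - c ≠ 0 := by linarith
    have : b k * b k = (c * (1 - c)) ^ 2 / (D k ^ 2 * (a k * a k)) := by
      simp only [hb]; rw [div_mul_div_comm]; congr 1 <;> ring
    rw [this, ha2 k hk]
    field_simp
  have hP : ∀ i j, i ≤ j → j ≤ n → inner ℝ (∑ l ∈ Finset.range i, b l • e l)
      (∑ l ∈ Finset.range j, b l • e l) = i * c ^ 2 / D i := by
    intro i
    induction i with
    | zero => intro j _ _; simp
    | succ i ih =>
      intro j hij hj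
      rw [Finset.sum_range_succ, inner_add_left, ih j (by omega) hj, inner_smul_left,
        gram_aux_sum n e he b i (by omega) j hj, if_pos (by omega)]
      have h1 : D i ≠ 0 := (hc i (by omega)).ne'
      have h2 : D (i + 1) ≠ 0 := (hc (i + 1) (by omega)).ne'
      simp only [conj_trivial]
      rw [hbb i (by omega)]
      field_simp
      simp only [hD]; push_cast; ring
  refine ⟨a, b, ha0, ?_⟩
  intro i j hij hj
  have h1 : D i ≠ 0 := (hc i (by omega)).ne'
  have hA := gram_aux_sum n e he b i (by omega) j hj.le
  have hB := gram_aux_sum n e he b j hj i (by omega)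
  rw [if_neg (by omega)] at hB
  rw [real_inner_comm] at hB
  rw [inner_add_left, inner_add_right, inner_add_right, inner_smul_left, inner_smul_left,
    inner_smul_right, inner_smul_right, hA, hB, hP i j hij hj.le, he i j (by omega) hj]
  simp only [conj_trivial]
  rcases hij.eq_or_lt with rfl | h
  · have := ha2 i hj
    simp only [if_true, lt_irrefl, if_false, mul_one, mul_zero, add_zero, zero_add]
    rw [this]
    field_simp
    simp only [hD]; push_cast; ring
  · rw [if_neg h.ne, if_pos h, if_neg h.ne, hab i (by omega)]
    field_simp
    simp only [hD]; ring

theorem gram_schmidt_d_exists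
    {V : Type*} [NormedAddCommGroup V] [InnerProductSpace ℝ V]
    (n : ℕ) (hn : 2 ≤ n) (x : Fin n → V) (hx : LinearIndependent ℝ x)
    (d : ℝ) (hd1 : 0 < d) (hd2 : d < Real.sqrt (2 * (n : ℝ) / ((n : ℝ) - 1))) :
    ∃ z : Fin n → V,
      (∀ i : Fin n,
        Submodule.span ℝ (z '' Set.Iic i) = Submodule.span ℝ (x '' Set.Iic i)) ∧
      (∀ i : Fin n, ‖z i‖ = 1) ∧
      (∀ i j : Fin n, i ≠ j → ‖z i - z j‖ = d) := by
  have hn' : (2 : ℝ) ≤ n := by exact_mod_cast hn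
  have hdd : d ^ 2 < 2 * (n : ℝ) / ((n : ℝ) - 1) := (Real.lt_sqrt hd1.le).1 hd2
  rw [lt_div_iff₀ (by linarith)] at hdd
  set g : Fin n → V := InnerProductSpace.gramSchmidtNormed ℝ x with hg
  have hgo : Orthonormal ℝ g := InnerProductSpace.gramSchmidtNormed_orthonormal hx
  have hgs : ∀ i, Submodule.span ℝ (g '' Set.Iic i) = Submodule.span ℝ (x '' Set.Iic i) := by
    intro i
    rw [hg, InnerProductSpace.span_gramSchmidtNormed, InnerProductSpace.span_gramSchmidt_Iic]
  set e : ℕ → V := fun k => if h : k < n then g ⟨k, h⟩ else 0 with hedef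
  have heg : ∀ i : Fin n, e i = g i := by intro i; simp [hedef]
  have he : ∀ k l, k < n → l < n → inner ℝ (e k) (e l) = if k = l then (1 : ℝ) else 0 := by
    intro k l hk hl
    have := orthonormal_iff_ite.1 hgo ⟨k, hk⟩ ⟨l, hl⟩
    simpa [hedef, hk, hl] using this
  obtain ⟨a, b, ha, hab⟩ := gram_aux n e he (1 - d ^ 2 / 2) (by nlinarith) (by
    intro k hk
    have hk' : (k : ℝ) ≤ n := by exact_mod_cast hk
    have hk0 : (0 : ℝ) ≤ k := Nat.cast_nonneg k
    nlinarith [sq_nonneg d, mul_le_mul_of_nonneg_right hk' (sq_nonneg d),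
      pow_pos hd1 2])
  have hz1 : ∀ i : Fin n, ‖a i • e i + ∑ l ∈ Finset.range i, b l • e l‖ = 1 := by
    intro i
    have := hab i i le_rfl i.2
    rw [if_pos rfl, real_inner_self_eq_norm_sq] at this
    nlinarith [norm_nonneg (a i • e i + ∑ l ∈ Finset.range i, b l • e l)]
  refine ⟨fun i => a i • e i + ∑ l ∈ Finset.range i, b l • e l, ?_, hz1, ?_⟩
  · intro i
    rw [← hgs]
    apply le_antisymm
    · rw [Submodule.span_le]
      rintro _ ⟨k, hk, rfl⟩
      have hmem : ∀ l : ℕ, l ≤ k → e l ∈ Submodule.span ℝ (g '' Set.Iic i) := by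
        intro l hl
        have hln : l < n := by omega
        rw [← show _ = e l from (heg ⟨l, hln⟩).symm]
        refine Submodule.subset_span ⟨_, ?_, rfl⟩
        exact le_trans (show (⟨l, hln⟩ : Fin n) ≤ k from hl) hk
      refine Submodule.add_mem _ (Submodule.smul_mem _ _ (hmem _ le_rfl)) ?_
      exact Submodule.sum_mem _ fun l hl =>
        Submodule.smul_mem _ _ (hmem _ (Finset.mem_range.1 hl).le)
    · rw [Submodule.span_le]
      have hmem : ∀ l : ℕ, l ≤ i → e l ∈ Submodule.span ℝ
          ((fun i : Fin n => a i • e i + ∑ l ∈ Finset.range i, b l • e l) '' Set.Iic i) := by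
        intro l
        induction l using Nat.strong_induction_on with
        | _ l ih =>
          intro hl
          have hln : l < n := by omega
          have hz : a l • e l + ∑ l ∈ Finset.range l, b l • e l ∈ Submodule.span ℝ
            ((fun i : Fin n => a i • e i + ∑ l ∈ Finset.range i, b l • e l) '' Set.Iic i) :=
            Submodule.subset_span ⟨⟨l, hln⟩, hl, rfl⟩
          have hs : ∑ l ∈ Finset.range l, b l • e l ∈ Submodule.span ℝ
            ((fun i : Fin n => a i • e i + ∑ l ∈ Finset.range i, b l • e l) '' Set.Iic i) :=
            Submodule.sum_mem _ fun m hm => Submodule.smul_mem _ _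
              (ih m (Finset.mem_range.1 hm) ((Finset.mem_range.1 hm).le.trans hl))
          have := (Submodule.add_mem_iff_left _ hs).1 hz
          exact (Submodule.smul_mem_iff _ (ha l hln)).1 this
      rintro _ ⟨k, hk, rfl⟩
      rw [← heg]
      exact hmem k hk
  · have key : ∀ i j : Fin n, i < j → ‖(a i • e i + ∑ l ∈ Finset.range i, b l • e l) -
        (a j • e j + ∑ l ∈ Finset.range j, b l • e l)‖ = d := by
      intro i j hij
      have h1 := hab i j (le_of_lt hij) j.2
      rw [if_neg (Nat.ne_of_lt hij)] at h1
      have h2 := norm_sub_sq_real (a i • e i + ∑ l ∈ Finset.range i, b l • e l)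
        (a j • e j + ∑ l ∈ Finset.range j, b l • e l)
      rw [h1, hz1, hz1] at h2
      rw [← sq_eq_sq₀ (norm_nonneg _) hd1.le, h2]
      ring
    intro i j hij
    rcases lt_or_gt_of_ne hij with h | h
    · exact key i j h
    · rw [norm_sub_rev]; exact key j i h
end

section
/- Let V be a real inner product space, let n ≥ 2, and let z_1, …, z_n be linearly independent vectors in V with ‖z_i‖ = 1 for all 1 ≤ i ≤ n and ‖z_i - z_j‖ = d for all i ≠ j, where 0 < d < 2. Then d < √(2n/(n-1)). -/
theorem gram_schmidt_d_necessary
    {V : Type*} [NormedAddCommGroup V] [InnerProductSpace ℝ V]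
    (n : ℕ) (hn : 2 ≤ n) (z : Fin n → V) (hz : LinearIndependent ℝ z)
    (d : ℝ) (hd1 : 0 < d) (hd2 : d < 2)
    (hnorm : ∀ i : Fin n, ‖z i‖ = 1)
    (hdist : ∀ i j : Fin n, i ≠ j → ‖z i - z j‖ = d) :
    d < Real.sqrt (2 * (n : ℝ) / ((n : ℝ) - 1)) := by
  have hn' : (2 : ℝ) ≤ n := by exact_mod_cast hn
  have hs : ∑ i, z i ≠ 0 := by
    intro h
    have h1 := Fintype.linearIndependent_iff.mp hz (fun _ => 1) (by simpa using h) ⟨0, by omega⟩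
    norm_num at h1
  have hin : ∀ i j, inner ℝ (z i) (z j) = (1 - d ^ 2 / 2) + if i = j then d ^ 2 / 2 else 0 := by
    intro i j
    by_cases h : i = j
    · subst h
      rw [real_inner_self_eq_norm_sq, hnorm]
      simp
    · have h1 := norm_sub_sq_real (z i) (z j)
      rw [hdist i j h, hnorm, hnorm] at h1
      simp only [h, if_false]
      linarith
  have hpos : 0 < inner ℝ (∑ i, z i) (∑ i, z i) := real_inner_self_pos.mpr hs
  have hval : inner ℝ (∑ i, z i) (∑ i, z i)
      = (n : ℝ) * (n * (1 - d ^ 2 / 2) + d ^ 2 / 2) := by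
    simp only [sum_inner, inner_sum, hin, Finset.sum_add_distrib]
    simp
    ring
  rw [hval] at hpos
  have h2 := (mul_pos_iff_of_pos_left (by linarith : (0 : ℝ) < n)).mp hpos
  apply Real.lt_sqrt_of_sq_lt
  rw [lt_div_iff₀ (by linarith)]
  nlinarith
end

section
/- Let V be a real inner product space, let (x_i)_{i=1}^∞ be a linearly independent sequence of vectors in V, and let d be a real number with 0 < d ≤ √2. Then there exists a sequence (z_i)_{i=1}^∞ in V such that span{z_1, …, z_i} = span{x_1, …, x_i} for every i ≥ 1, ‖z_i‖ = 1 for all i ≥ 1, and ‖z_i - z_j‖ = d for all i ≠ j. -/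
theorem gram_schmidt_d_exists_infinite
    {V : Type*} [NormedAddCommGroup V] [InnerProductSpace ℝ V]
    (x : ℕ → V) (hx : LinearIndependent ℝ x)
    (d : ℝ) (hd1 : 0 < d) (hd2 : d ≤ Real.sqrt 2) :
    ∃ z : ℕ → V,
      (∀ i : ℕ,
        Submodule.span ℝ (z '' Set.Iic i) = Submodule.span ℝ (x '' Set.Iic i)) ∧
      (∀ i : ℕ, ‖z i‖ = 1) ∧
      (∀ i j : ℕ, i ≠ j → ‖z i - z j‖ = d) := by
  -- an orthonormal sequence with the same partial spans
  obtain ⟨e, he, hspan⟩ : ∃ e : ℕ → V, Orthonormal ℝ e ∧ ∀ i : ℕ,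
      Submodule.span ℝ (e '' Set.Iic i) = Submodule.span ℝ (x '' Set.Iic i) :=
    ⟨InnerProductSpace.gramSchmidtNormed ℝ x,
      InnerProductSpace.gramSchmidtNormed_orthonormal hx, fun i => by
        rw [InnerProductSpace.span_gramSchmidtNormed, InnerProductSpace.span_gramSchmidt_Iic]⟩
  have hd3 : d ^ 2 ≤ 2 := by
    have := Real.sq_sqrt (show (0 : ℝ) ≤ 2 by norm_num)
    nlinarith
  obtain ⟨c, hc⟩ : ∃ c : ℝ, c = 1 - d ^ 2 / 2 := ⟨_, rfl⟩
  have hc0 : 0 ≤ c := by linarith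
  have hc1 : c < 1 := by nlinarith
  -- squared norms of the parts below the diagonal
  obtain ⟨s, hs0, hs1⟩ : ∃ s : ℕ → ℝ, s 0 = 0 ∧
      ∀ n, s (n + 1) = s n + ((c - s n) / Real.sqrt (1 - s n)) ^ 2 :=
    ⟨fun n => Nat.rec 0 (fun _ t => t + ((c - t) / Real.sqrt (1 - t)) ^ 2) n, rfl, fun _ => rfl⟩
  have hsc : ∀ n, s n ≤ c := by
    intro n
    induction n with
    | zero => rw [hs0]; exact hc0
    | succ n ih =>
      have h1 : 0 < 1 - s n := by linarith
      have h2 : (c - s n) ^ 2 / (1 - s n) ≤ c - s n := by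
        rw [div_le_iff₀ h1]; nlinarith
      rw [hs1, div_pow, Real.sq_sqrt h1.le]; linarith
  obtain ⟨b, hb⟩ : ∃ b : ℕ → ℝ, ∀ n, b n = Real.sqrt (1 - s n) := ⟨_, fun _ => rfl⟩
  have hb0 : ∀ n, 0 < b n := fun n => by
    rw [hb]; exact Real.sqrt_pos.2 (by linarith [hsc n])
  have hb2 : ∀ n, b n * b n = 1 - s n := fun n => by
    rw [hb]; exact Real.mul_self_sqrt (by linarith [hsc n])
  obtain ⟨a, ha⟩ : ∃ a : ℕ → ℝ, ∀ n, a n = (c - s n) / b n := ⟨_, fun _ => rfl⟩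
  have hab : ∀ n, a n * b n = c - s n := fun n => by
    rw [ha]; exact div_mul_cancel₀ _ (hb0 n).ne'
  have hs2 : ∀ n, s (n + 1) = s n + a n * a n := fun n => by
    rw [hs1, ha, hb]; ring
  obtain ⟨w, hw0, hw1⟩ : ∃ w : ℕ → V, w 0 = 0 ∧ ∀ n, w (n + 1) = w n + a n • e n :=
    ⟨fun n => Nat.rec 0 (fun n t => t + a n • e n) n, rfl, fun _ => rfl⟩
  have hee : ∀ n, inner ℝ (e n) (e n) = 1 := fun n => by
    rw [real_inner_self_eq_norm_sq, he.1 n]; norm_num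
  have hej : ∀ i j, i ≠ j → inner ℝ (e i) (e j) = 0 := fun i j h => he.2 h
  have hwe : ∀ i j, i ≤ j → inner ℝ (w i) (e j) = 0 := by
    intro i
    induction i with
    | zero => intro j _; rw [hw0, inner_zero_left]
    | succ i ih =>
      intro j hj
      rw [hw1, inner_add_left, real_inner_smul_left, ih j (by omega), hej i j (by omega)]; ring
  have hew : ∀ i j, i ≤ j → inner ℝ (e j) (w i) = 0 := fun i j h => by
    rw [real_inner_comm]; exact hwe i j h
  have hww : ∀ n, inner ℝ (w n) (w n) = s n := by
    intro n
    induction n with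
    | zero => rw [hw0, inner_zero_left, hs0]
    | succ n ih =>
      rw [hw1, hs2]
      simp only [inner_add_left, inner_add_right, real_inner_smul_left, real_inner_smul_right,
        ih, hwe n n le_rfl, hew n n le_rfl, hee]
      ring
  obtain ⟨z, hz⟩ : ∃ z : ℕ → V, ∀ n, z n = w n + b n • e n := ⟨_, fun _ => rfl⟩
  have hzz : ∀ n, inner ℝ (z n) (z n) = 1 := by
    intro n
    rw [hz]
    simp only [inner_add_left, inner_add_right, real_inner_smul_left, real_inner_smul_right,
        hww, hwe n n le_rfl, hew n n le_rfl, hee]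
    linarith [hb2 n]
  have hez : ∀ i j, i < j → inner ℝ (z i) (e j) = 0 := by
    intro i j h
    rw [hz, inner_add_left, real_inner_smul_left, hwe i j h.le, hej i j h.ne]; ring
  have hzw : ∀ i j, i < j → inner ℝ (z i) (w j) = c := by
    intro i j h
    induction j, h using Nat.le_induction with
    | base =>
      rw [hw1, hz]
      simp only [inner_add_left, inner_add_right, real_inner_smul_left, real_inner_smul_right,
        hww, hwe i i le_rfl, hew i i le_rfl, hee]
      linarith [hab i]
    | succ j h ih =>
      rw [hw1, inner_add_right, real_inner_smul_right, ih, hez i j h]; ring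
  have hzc : ∀ i j, i < j → inner ℝ (z i) (z j) = c := by
    intro i j h
    rw [hz j, inner_add_right, real_inner_smul_right, hzw i j h, hez i j h]; ring
  have hzn : ∀ n, ‖z n‖ = 1 := fun n => by
    have := hzz n
    rw [real_inner_self_eq_norm_sq] at this
    nlinarith [norm_nonneg (z n)]
  have hIio : ∀ n : ℕ, Set.Iio (n + 1) = insert n (Set.Iio n) := by
    intro n; ext k; simp only [Set.mem_Iio, Set.mem_insert_iff]; omega
  have hwm : ∀ n, w n ∈ Submodule.span ℝ (e '' Set.Iio n) := by
    intro n
    induction n with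
    | zero => rw [hw0]; exact Submodule.zero_mem _
    | succ n ih =>
      rw [hw1]
      refine Submodule.add_mem _ (Submodule.span_mono (Set.image_mono
        (Set.Iio_subset_Iio (Nat.le_succ n))) ih) (Submodule.smul_mem _ _
          (Submodule.subset_span ⟨n, Nat.lt_succ_self n, rfl⟩))
  have hsp : ∀ n, Submodule.span ℝ (z '' Set.Iio n) = Submodule.span ℝ (e '' Set.Iio n) := by
    intro n
    induction n with
    | zero => simp
    | succ n ih =>
      have hm := hwm n
      rw [hIio, Set.image_insert_eq, Set.image_insert_eq, Submodule.span_insert,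
        Submodule.span_insert, ih]
      generalize Submodule.span ℝ (e '' Set.Iio n) = S at hm
      apply le_antisymm
      · refine sup_le ?_ le_sup_right
        rw [Submodule.span_singleton_le_iff_mem, hz]
        exact Submodule.add_mem _ (Submodule.mem_sup_right hm)
          (Submodule.smul_mem _ _ (Submodule.mem_sup_left (Submodule.mem_span_singleton_self _)))
      · refine sup_le ?_ le_sup_right
        rw [Submodule.span_singleton_le_iff_mem]
        have h : e n = (b n)⁻¹ • (z n - w n) := by
          rw [hz, add_sub_cancel_left, smul_smul, inv_mul_cancel₀ (hb0 n).ne', one_smul]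
        rw [h]
        exact Submodule.smul_mem _ _ (Submodule.sub_mem _
          (Submodule.mem_sup_left (Submodule.mem_span_singleton_self _))
          (Submodule.mem_sup_right hm))
  have hlt : ∀ i j, i < j → ‖z i - z j‖ = d := by
    intro i j h
    have h1 := norm_sub_sq_real (z i) (z j)
    rw [hzn, hzn, hzc i j h, hc] at h1
    have h2 : ‖z i - z j‖ ^ 2 = d ^ 2 := by rw [h1]; ring
    exact (sq_eq_sq₀ (norm_nonneg _) hd1.le).1 h2
  refine ⟨z, ?_, hzn, ?_⟩
  · intro i
    have h : Set.Iic i = Set.Iio (i + 1) := by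
      ext k; simp only [Set.mem_Iio, Set.mem_Iic]; omega
    rw [← hspan, h, hsp]
  · intro i j hij
    rcases lt_or_gt_of_ne hij with h | h
    · exact hlt i j h
    · rw [norm_sub_rev]; exact hlt j i h
end

section
/- Let V be a real inner product space, let k ≥ 1, let p be a real number with -1/k < p < 1, and let z_1, …, z_k be vectors in V with ‖z_i‖ = 1 for all i and ⟪z_i, z_j⟫ = p for all i ≠ j. Let y be a unit vector in V orthogonal to each z_i, 1 ≤ i ≤ k. Define w = α·y + β·(z_1 + z_2 + ⋯ + z_k), where α = √((1-p)(1+pk)/(1+p(k-1))) and β = p/(1+p(k-1)). Then ‖w‖ = 1 and ⟪w, z_i⟫ = p for every 1 ≤ i ≤ k. -/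
open scoped RealInnerProductSpace

theorem gram_schmidt_p_step
    {V : Type*} [NormedAddCommGroup V] [InnerProductSpace ℝ V]
    (k : ℕ) (hk : 1 ≤ k) (p : ℝ) (hp1 : -(1 / (k : ℝ)) < p) (hp2 : p < 1)
    (z : Fin k → V)
    (hnorm : ∀ i : Fin k, ‖z i‖ = 1)
    (hinner : ∀ i j : Fin k, i ≠ j → ⟪z i, z j⟫ = p)
    (y : V) (hy : ‖y‖ = 1) (hyz : ∀ i : Fin k, ⟪y, z i⟫ = 0)
    (w : V)
    (hw : w = Real.sqrt ((1 - p) * (1 + p * (k : ℝ)) / (1 + p * ((k : ℝ) - 1))) • y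
        + (p / (1 + p * ((k : ℝ) - 1))) • ∑ i, z i) :
    ‖w‖ = 1 ∧ ∀ i : Fin k, ⟪w, z i⟫ = p := by
  have hk1 : (1 : ℝ) ≤ k := by exact_mod_cast hk
  have hk0 : (0 : ℝ) < k := by linarith
  have hpk : 0 < 1 + p * (k : ℝ) := by
    have h := mul_lt_mul_of_pos_right hp1 hk0
    have h2 : -(1 / (k : ℝ)) * k = -1 := by field_simp
    linarith
  have hD : 0 < 1 + p * ((k : ℝ) - 1) := by
    rcases le_or_gt 0 p with h | h
    · have := mul_nonneg h (sub_nonneg.2 hk1)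
      linarith
    · linarith
  have hS : ∀ i : Fin k, ⟪∑ j, z j, z i⟫ = 1 + p * ((k : ℝ) - 1) := by
    intro i
    rw [sum_inner, ← Finset.add_sum_erase _ _ (Finset.mem_univ i),
      Finset.sum_congr rfl (fun j hj => hinner j i (Finset.ne_of_mem_erase hj)),
      real_inner_self_eq_norm_sq, hnorm, Finset.sum_const,
      Finset.card_erase_of_mem (Finset.mem_univ i), Finset.card_univ, Fintype.card_fin,
      nsmul_eq_mul, Nat.cast_sub hk]
    push_cast
    ring
  have hwz : ∀ i : Fin k, ⟪w, z i⟫ = p := by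
    intro i
    rw [hw, inner_add_left, real_inner_smul_left, real_inner_smul_left, hyz, hS]
    field_simp
    ring
  refine ⟨?_, hwz⟩
  have hwS : ⟪w, ∑ i, z i⟫ = k * p := by
    rw [inner_sum]
    simp [hwz]
  have hSy : ⟪∑ i, z i, y⟫ = 0 := by
    rw [real_inner_comm, inner_sum]
    simp [hyz]
  have hwy : ⟪w, y⟫ =
      Real.sqrt ((1 - p) * (1 + p * (k : ℝ)) / (1 + p * ((k : ℝ) - 1))) := by
    rw [hw, inner_add_left, real_inner_smul_left, real_inner_smul_left, hSy,
      real_inner_self_eq_norm_sq, hy]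
    ring
  have hα : 0 ≤ (1 - p) * (1 + p * (k : ℝ)) / (1 + p * ((k : ℝ) - 1)) :=
    div_nonneg (mul_nonneg (by linarith) hpk.le) hD.le
  have hww : ⟪w, w⟫ = 1 := by
    have h : ⟪w, w⟫ = ⟪Real.sqrt ((1 - p) * (1 + p * (k : ℝ)) / (1 + p * ((k : ℝ) - 1))) • y
        + (p / (1 + p * ((k : ℝ) - 1))) • ∑ i, z i, w⟫ := by rw [← hw]
    rw [h, inner_add_left, real_inner_smul_left, real_inner_smul_left,
      real_inner_comm w y, real_inner_comm w (∑ i, z i), hwy, hwS, Real.mul_self_sqrt hα]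
    field_simp
    ring
  rw [real_inner_self_eq_norm_sq] at hww
  nlinarith [norm_nonneg w]
end

section
/- Let V be a real inner product space, let n ≥ 3, let y_1, …, y_n be an orthonormal set in V, let -1/(n-1) < p < 1, and define vectors z_1, …, z_n recursively by z_1 = y_1 and z_{k+1} = √((1-p)(1+pk)/(1+p(k-1)))·y_{k+1} + (p/(1+p(k-1)))·(z_1 + z_2 + ⋯ + z_k) for 1 ≤ k ≤ n-1. Then each z_k lies in span{y_1, …, y_k}, and the coordinates stabilize: for every 2 ≤ k ≤ n-1 and every 1 ≤ i ≤ k-1 one has ⟪z_{k+1}, y_i⟫ = ⟪z_k, y_i⟫. -/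
open scoped RealInnerProductSpace

theorem gram_schmidt_p_coords_stabilize
    {V : Type*} [NormedAddCommGroup V] [InnerProductSpace ℝ V]
    (n : ℕ) (hn : 3 ≤ n) (p : ℝ)
    (hp1 : -(1 / ((n : ℝ) - 1)) < p) (hp2 : p < 1)
    (y : ℕ → V)
    (hynorm : ∀ i : ℕ, 1 ≤ i → i ≤ n → ‖y i‖ = 1)
    (hyorth : ∀ i j : ℕ, 1 ≤ i → i ≤ n → 1 ≤ j → j ≤ n → i ≠ j → ⟪y i, y j⟫ = 0)
    (z : ℕ → V) (hz1 : z 1 = y 1)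
    (hrec : ∀ k : ℕ, 1 ≤ k → k ≤ n - 1 →
      z (k + 1)
        = Real.sqrt ((1 - p) * (1 + p * (k : ℝ)) / (1 + p * ((k : ℝ) - 1))) • y (k + 1)
          + (p / (1 + p * ((k : ℝ) - 1))) • ∑ j ∈ Finset.Icc 1 k, z j) :
    (∀ k : ℕ, 1 ≤ k → k ≤ n →
      z k ∈ Submodule.span ℝ (y '' {i : ℕ | 1 ≤ i ∧ i ≤ k})) ∧
    (∀ k : ℕ, 2 ≤ k → k ≤ n - 1 → ∀ i : ℕ, 1 ≤ i → i ≤ k - 1 →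
      ⟪z (k + 1), y i⟫ = ⟪z k, y i⟫) := by
  have hn' : (3 : ℝ) ≤ n := by exact_mod_cast hn
  have hpn : -1 < p * ((n : ℝ) - 1) := by
    have h0 : (0 : ℝ) < (n : ℝ) - 1 := by linarith
    have h := mul_lt_mul_of_pos_right hp1 h0
    have h2 : -(1 / ((n : ℝ) - 1)) * ((n : ℝ) - 1) = -1 := by
      field_simp
    linarith
  have hpos : ∀ t : ℝ, 0 ≤ t → t ≤ (n : ℝ) - 1 → 0 < 1 + p * t := by
    intro t ht0 ht1
    rcases le_total 0 p with h | h
    · have := mul_nonneg h ht0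
      linarith
    · have := mul_le_mul_of_nonpos_left ht1 h
      linarith
  constructor
  · intro k
    induction k using Nat.strong_induction_on with
    | _ k ih =>
      intro hk1 hkn
      rcases Nat.lt_or_ge 1 k with h | h
      · obtain ⟨m, rfl⟩ : ∃ m, k = m + 1 := ⟨k - 1, by omega⟩
        rw [hrec m (by omega) (by omega)]
        refine Submodule.add_mem _ (Submodule.smul_mem _ _ (Submodule.subset_span ?_))
          (Submodule.smul_mem _ _ (Submodule.sum_mem _ ?_))
        · exact ⟨m + 1, ⟨by omega, le_refl _⟩, rfl⟩
        · intro j hj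
          rw [Finset.mem_Icc] at hj
          refine Submodule.span_mono (Set.image_mono ?_)
            (ih j (by omega) (by omega) (by omega))
          intro a ha
          exact ⟨ha.1, by have := ha.2; omega⟩
      · obtain rfl : k = 1 := by omega
        rw [hz1]
        exact Submodule.subset_span ⟨1, ⟨le_refl _, le_refl _⟩, rfl⟩
  · intro k hk2 hkn i hi1 hik
    obtain ⟨m, rfl⟩ : ∃ m, k = m + 1 := ⟨k - 1, by omega⟩
    have key : ∀ l : ℕ, 1 ≤ l → l ≤ n - 1 → i ≤ l → ⟪z (l + 1), y i⟫
        = (p / (1 + p * ((l : ℝ) - 1))) * ⟪∑ j ∈ Finset.Icc 1 l, z j, y i⟫ := by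
      intro l hl1 hln hil
      rw [hrec l hl1 hln, inner_add_left, real_inner_smul_left, real_inner_smul_left,
        hyorth (l + 1) i (by omega) (by omega) hi1 (by omega) (by omega)]
      ring
    have hmn : (m : ℝ) + 2 ≤ n := by
      have : m + 2 ≤ n := by omega
      exact_mod_cast this
    have hm1 : (1 : ℝ) ≤ m := by
      have : 1 ≤ m := by omega
      exact_mod_cast this
    have hA := (hpos ((m : ℝ) - 1) (by linarith) (by linarith)).ne'
    have hB := (hpos (m : ℝ) (by linarith) (by linarith)).ne'
    rw [key (m + 1) (by omega) hkn (by omega),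
      Finset.sum_Icc_succ_top (by omega : 1 ≤ m + 1), inner_add_left,
      key m (by omega) (by omega) (by omega)]
    generalize ⟪∑ j ∈ Finset.Icc 1 m, z j, y i⟫ = s
    push_cast
    rw [add_sub_cancel_right]
    generalize hAe : 1 + p * ((m : ℝ) - 1) = A at *
    have hBe : 1 + p * (m : ℝ) = A + p := by rw [← hAe]; ring
    rw [hBe] at hB ⊢
    field_simp
end

section
/- Let V be a real inner product space, let n ≥ 2, let y_1, …, y_n be an orthonormal set in V, let p be a real number with -1/(n-1) < p < 1 and p ≠ 0, and define vectors z_1, …, z_n recursively by z_1 = y_1 and z_{k+1} = √((1-p)(1+pk)/(1+p(k-1)))·y_{k+1} + (p/(1+p(k-1)))·(z_1 + z_2 + ⋯ + z_k) for 1 ≤ k ≤ n-1. Then for every 2 ≤ k ≤ n, z_k = a_1(p)·y_1 + a_2(p)·y_2 + ⋯ + a_{k-1}(p)·y_{k-1} + ((1+p(k-1))/p)·a_k(p)·y_k, where a_m(p) = (p/(1+p(m-1)))·√((1-p)(1+p(m-1))/(1+p(m-2))) for m ≥ 1. -/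
open scoped RealInnerProductSpace

/-- The coefficients `a_m(p)` from the Gram--Schmidt `p`-algorithm. -/
noncomputable def aCoeff (p : ℝ) (m : ℕ) : ℝ :=
  p / (1 + p * ((m : ℝ) - 1))
    * Real.sqrt ((1 - p) * (1 + p * ((m : ℝ) - 1)) / (1 + p * ((m : ℝ) - 2)))

theorem gram_schmidt_p_explicit
    {V : Type*} [NormedAddCommGroup V] [InnerProductSpace ℝ V]
    (n : ℕ) (hn : 2 ≤ n) (p : ℝ)
    (hp1 : -(1 / ((n : ℝ) - 1)) < p) (hp2 : p < 1) (hp0 : p ≠ 0)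
    (y : ℕ → V)
    (hynorm : ∀ i : ℕ, 1 ≤ i → i ≤ n → ‖y i‖ = 1)
    (hyorth : ∀ i j : ℕ, 1 ≤ i → i ≤ n → 1 ≤ j → j ≤ n → i ≠ j → ⟪y i, y j⟫ = 0)
    (z : ℕ → V) (hz1 : z 1 = y 1)
    (hrec : ∀ k : ℕ, 1 ≤ k → k ≤ n - 1 →
      z (k + 1)
        = Real.sqrt ((1 - p) * (1 + p * (k : ℝ)) / (1 + p * ((k : ℝ) - 1))) • y (k + 1)
          + (p / (1 + p * ((k : ℝ) - 1))) • ∑ j ∈ Finset.Icc 1 k, z j) :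
    ∀ k : ℕ, 2 ≤ k → k ≤ n →
      z k = (∑ i ∈ Finset.Icc 1 (k - 1), aCoeff p i • y i)
        + ((1 + p * ((k : ℝ) - 1)) / p * aCoeff p k) • y k := by
  have hn1 : (0 : ℝ) < (n : ℝ) - 1 := by
    have : (2 : ℝ) ≤ n := by exact_mod_cast hn
    linarith
  have hpn : -1 < p * ((n : ℝ) - 1) := by
    have h := mul_lt_mul_of_pos_right hp1 hn1
    have h2 : -(1 / ((n : ℝ) - 1)) * ((n : ℝ) - 1) = -1 := by
      field_simp
    linarith
  have hpos : ∀ k : ℕ, k + 1 ≤ n → 0 < 1 + p * (k : ℝ) := by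
    intro k hk
    have hk' : (k : ℝ) + 1 ≤ n := by exact_mod_cast hk
    have hk0 : (0 : ℝ) ≤ k := Nat.cast_nonneg k
    rcases le_total 0 p with h | h
    · positivity
    · nlinarith
  have ha : ∀ k : ℕ, aCoeff p (k + 1) = p / (1 + p * (k : ℝ)) *
      Real.sqrt ((1 - p) * (1 + p * (k : ℝ)) / (1 + p * ((k : ℝ) - 1))) := by
    intro k
    unfold aCoeff
    have h1 : (((k + 1 : ℕ) : ℝ) - 1) = k := by push_cast; ring
    have h2 : (((k + 1 : ℕ) : ℝ) - 2) = k - 1 := by push_cast; ring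
    rw [h1, h2]
  have hS : ∀ k : ℕ, k + 1 ≤ n →
      (p / (1 + p * (k : ℝ))) • ∑ j ∈ Finset.Icc 1 (k + 1), z j
        = ∑ i ∈ Finset.Icc 1 (k + 1), aCoeff p i • y i := by
    intro k
    induction k with
    | zero =>
      intro _
      have h1 : (1 - p) ≠ 0 := by linarith
      have h3 : (1 - p) / (1 + -p) = 1 := by rw [← sub_eq_add_neg]; exact div_self h1
      have := ha 0
      simp [h3] at this
      simp [this, hz1]
    | succ k ih =>
      intro hk
      have ih := ih (by omega)
      have p1 := hpos k (by omega)
      have p2 := hpos (k + 1) hk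
      have hr := hrec (k + 1) (by omega) (by omega)
      have hak := ha (k + 1)
      have h1 : (((k + 1 : ℕ) : ℝ) - 1) = k := by push_cast; ring
      rw [h1] at hr hak
      rw [Finset.sum_Icc_succ_top (by omega), Finset.sum_Icc_succ_top (by omega) (fun i => aCoeff p i • y i),
        ← ih, hr, hak]
      have hc : p / (1 + p * (k : ℝ)) = p / (1 + p * ((k + 1 : ℕ) : ℝ)) * (1 + p / (1 + p * (k : ℝ))) := by
        have := p1.ne'
        have := p2.ne'
        push_cast at *
        field_simp
        ring
      conv_rhs => rw [hc]
      module
  intro k hk2 hkn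
  obtain ⟨m, rfl⟩ : ∃ m, k = m + 2 := ⟨k - 2, by omega⟩
  have hr := hrec (m + 1) (by omega) (by omega)
  have h1 : (((m + 1 : ℕ) : ℝ) - 1) = m := by push_cast; ring
  have h2 : (((m + 2 : ℕ) : ℝ) - 1) = (m + 1 : ℕ) := by push_cast; ring
  have hs := hS m (by omega)
  have p2 := (hpos (m + 1) hkn).ne'
  have hak := ha (m + 1)
  rw [h1] at hr hak
  rw [hs] at hr
  have e : m + 2 - 1 = m + 1 := rfl
  rw [e, h2, show m + 2 = m + 1 + 1 from rfl, hr, hak, add_comm, ← mul_assoc,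
    div_mul_div_cancel₀ hp0, div_self p2, one_mul]
end

section
/- Let V be a real inner product space, let (y_i)_{i=1}^∞ be an orthonormal sequence in V, let 0 < p < 1, and for each k ≥ 2 define z_k = a_1(p)·y_1 + ⋯ + a_{k-1}(p)·y_{k-1} + ((1+p(k-1))/p)·a_k(p)·y_k, with z_1 = y_1, where a_m(p) = (p/(1+p(m-1)))·√((1-p)(1+p(m-1))/(1+p(m-2))). Then ‖z_k‖ = 1 for all k ≥ 1, ⟪z_k, z_m⟫ = p and ‖z_k - z_m‖ = √(2-2p) for all k ≠ m. -/
open scoped RealInnerProductSpace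

lemma aCoeff_den_pos (p : ℝ) (hp1 : 0 < p) (hp2 : p < 1) (n : ℕ) :
    0 < 1 + p * ((n : ℝ) - 1) := by
  have : 0 ≤ p * (n : ℝ) := by positivity
  nlinarith

lemma aCoeff_sq (p : ℝ) (hp1 : 0 < p) (hp2 : p < 1) (n : ℕ) :
    aCoeff p (n + 1) * aCoeff p (n + 1)
      = p ^ 2 * (1 - p) / ((1 + p * n) * (1 + p * ((n : ℝ) - 1))) := by
  have h1 := aCoeff_den_pos p hp1 hp2 n
  have h2 : 0 < 1 + p * (n : ℝ) := by positivity
  have h3 : 0 < 1 - p := by linarith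
  unfold aCoeff
  have e1 : ((n + 1 : ℕ) : ℝ) - 1 = n := by push_cast; ring
  have e2 : ((n + 1 : ℕ) : ℝ) - 2 = n - 1 := by push_cast; ring
  rw [e1, e2, mul_mul_mul_comm, Real.mul_self_sqrt (by positivity)]
  have := h1.ne'
  have := h2.ne'
  field_simp

lemma aCoeff_one (p : ℝ) (hp2 : p < 1) : aCoeff p 1 = p := by
  have h3 : 1 - p ≠ 0 := by linarith
  have e : (1 + p * ((1 : ℝ) - 2)) = 1 - p := by ring
  simp [aCoeff, e, h3]

theorem gram_schmidt_p_sequence_properties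
    {V : Type*} [NormedAddCommGroup V] [InnerProductSpace ℝ V]
    (p : ℝ) (hp1 : 0 < p) (hp2 : p < 1)
    (y : ℕ → V)
    (hynorm : ∀ i : ℕ, 1 ≤ i → ‖y i‖ = 1)
    (hyorth : ∀ i j : ℕ, 1 ≤ i → 1 ≤ j → i ≠ j → ⟪y i, y j⟫ = 0)
    (z : ℕ → V) (hz1 : z 1 = y 1)
    (hzk : ∀ k : ℕ, 2 ≤ k →
      z k = (∑ i ∈ Finset.Icc 1 (k - 1), aCoeff p i • y i)
        + ((1 + p * ((k : ℝ) - 1)) / p * aCoeff p k) • y k) :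
    (∀ k : ℕ, 1 ≤ k → ‖z k‖ = 1) ∧
    (∀ k m : ℕ, 1 ≤ k → 1 ≤ m → k ≠ m →
      ⟪z k, z m⟫ = p ∧ ‖z k - z m‖ = Real.sqrt (2 - 2 * p)) := by
  
  have hyy : ∀ i, 1 ≤ i → ⟪y i, y i⟫ = 1 := by
    intro i hi
    rw [real_inner_self_eq_norm_sq, hynorm i hi]; norm_num
  obtain ⟨s, hs⟩ : ∃ s : ℕ → V, ∀ n, s n = ∑ i ∈ Finset.Icc 1 n, aCoeff p i • y i := ⟨_, fun _ => rfl⟩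
  have hs0 : s 0 = 0 := by simp [hs]
  have hsS : ∀ n, s (n + 1) = s n + aCoeff p (n + 1) • y (n + 1) := by
    intro n
    rw [hs, hs, Finset.sum_Icc_succ_top (by omega)]
  have hz : ∀ n, z (n + 1) = s n + ((1 + p * n) / p * aCoeff p (n + 1)) • y (n + 1) := by
    intro n
    rcases Nat.eq_zero_or_pos n with rfl | hn
    · simp [hz1, hs0, aCoeff_one p hp2, hp1.ne']
    · rw [hzk _ (by omega), hs]
      simp
  have hsy : ∀ n m, n < m → ⟪s n, y m⟫ = 0 := by
    intro n
    induction n with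
    | zero => intro m _; simp [hs0]
    | succ n ih =>
      intro m hm
      rw [hsS, inner_add_left, real_inner_smul_left, ih m (by omega),
        hyorth _ _ (by omega) (by omega) (by omega)]
      simp
  have hys : ∀ n m, n < m → ⟪y m, s n⟫ = 0 := by
    intro n m h
    rw [real_inner_comm, hsy n m h]
  have hss : ∀ n, ⟪s n, s n⟫ = p - p * (1 - p) / (1 + p * ((n : ℝ) - 1)) := by
    intro n
    induction n with
    | zero =>
      have h3 : 1 - p ≠ 0 := by linarith
      have e : (1 + p * (((0 : ℕ) : ℝ) - 1)) = 1 - p := by push_cast; ring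
      rw [e, hs0]; field_simp; simp
    | succ n ih =>
      rw [hsS]
      simp only [inner_add_left, inner_add_right, real_inner_smul_left, real_inner_smul_right]
      rw [ih, hsy n _ (by omega), hys n _ (by omega), hyy _ (by omega)]
      have h1 := (aCoeff_den_pos p hp1 hp2 n).ne'
      have h2 : 1 + p * (n : ℝ) ≠ 0 := by positivity
      have e1 : ((n + 1 : ℕ) : ℝ) - 1 = n := by push_cast; ring
      have := aCoeff_sq p hp1 hp2 n
      rw [e1]
      simp only [mul_one, mul_zero, zero_add, add_zero]
      rw [this]
      field_simp
      ring
  have hzz : ∀ n, ⟪z (n + 1), z (n + 1)⟫ = 1 := by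
    intro n
    rw [hz]
    simp only [inner_add_left, inner_add_right, real_inner_smul_left, real_inner_smul_right]
    rw [hss, hsy n _ (by omega), hys n _ (by omega), hyy _ (by omega)]
    simp only [mul_one, mul_zero, zero_add, add_zero]
    rw [mul_mul_mul_comm, aCoeff_sq p hp1 hp2 n]
    have h1 := (aCoeff_den_pos p hp1 hp2 n).ne'
    have h2 : 1 + p * (n : ℝ) ≠ 0 := by positivity
    field_simp
    ring
  have hzy : ∀ n m, n + 1 < m → ⟪z (n + 1), y m⟫ = 0 := by
    intro n m h
    rw [hz, inner_add_left, real_inner_smul_left, hsy n m (by omega),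
      hyorth _ _ (by omega) (by omega) (by omega)]
    simp
  have hzs : ∀ n m, n + 1 ≤ m → ⟪z (n + 1), s m⟫ = p := by
    intro n m h
    induction m, h using Nat.le_induction with
    | base =>
      rw [hz, hsS]
      simp only [inner_add_left, inner_add_right, real_inner_smul_left, real_inner_smul_right]
      rw [hss, hsy n _ (by omega), hys n _ (by omega), hyy _ (by omega)]
      simp only [mul_one, mul_zero, zero_add, add_zero]
      have h1 := (aCoeff_den_pos p hp1 hp2 n).ne'
      have h2 : 1 + p * (n : ℝ) ≠ 0 := by positivity
      have e := aCoeff_sq p hp1 hp2 n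
      have e' : aCoeff p (n + 1) * ((1 + p * n) / p * aCoeff p (n + 1))
        = (1 + p * n) / p * (aCoeff p (n + 1) * aCoeff p (n + 1)) := by ring
      first
        | rw [e', e]
        | rw [mul_assoc, e]
      field_simp
      ring
    | succ m hm ih =>
      rw [hsS, inner_add_right, real_inner_smul_right, ih, hzy n _ (by omega)]
      simp
  have hlt : ∀ k m, 1 ≤ k → k < m → ⟪z k, z m⟫ = p := by
    intro k m hk hkm
    obtain ⟨n, rfl⟩ : ∃ n, k = n + 1 := ⟨k - 1, by omega⟩
    obtain ⟨l, rfl⟩ : ∃ l, m = l + 1 := ⟨m - 1, by omega⟩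
    rw [hz l, inner_add_right, real_inner_smul_right, hzs n l (by omega), hzy n _ (by omega)]
    simp
  have hne : ∀ k m, 1 ≤ k → 1 ≤ m → k ≠ m → ⟪z k, z m⟫ = p := by
    intro k m hk hm h
    rcases Nat.lt_or_gt_of_ne h with h | h
    · exact hlt k m hk h
    · rw [real_inner_comm]; exact hlt m k hm h
  have hnorm : ∀ k, 1 ≤ k → ‖z k‖ = 1 := by
    intro k hk
    obtain ⟨n, rfl⟩ : ∃ n, k = n + 1 := ⟨k - 1, by omega⟩
    rw [norm_eq_sqrt_real_inner, hzz, Real.sqrt_one]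
  refine ⟨hnorm, fun k m hk hm h => ⟨hne k m hk hm h, ?_⟩⟩
  rw [← Real.sqrt_sq (norm_nonneg (z k - z m)), norm_sub_sq_real, hnorm k hk, hnorm m hm,
    hne k m hk hm h]
  congr 1
  ring
end

section
/- Let 0 < p < 1 and for m ≥ 1 set a_m(p) = (p/(1+p(m-1)))·√((1-p)(1+p(m-1))/(1+p(m-2))). Then for every integer k ≥ 1, the tail sum satisfies ∑_{m=k}^∞ a_m(p)² = p(1-p)/(1+p(k-2)). -/
theorem aCoeff_sq_tail_sum (p : ℝ) (hp1 : 0 < p) (hp2 : p < 1)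
    (k : ℕ) (hk : 1 ≤ k) :
    HasSum (fun j : ℕ => aCoeff p (k + j) ^ 2)
      (p * (1 - p) / (1 + p * ((k : ℝ) - 2))) := by
  have hk' : (1 : ℝ) ≤ k := by exact_mod_cast hk
  have hpos : ∀ j : ℕ, 0 < 1 + p * ((k : ℝ) + j - 2) := by
    intro j
    have hj : (0 : ℝ) ≤ j := Nat.cast_nonneg j
    nlinarith [mul_nonneg hp1.le (by linarith : (0 : ℝ) ≤ (k : ℝ) + j - 1)]
  have hterm : ∀ j : ℕ, aCoeff p (k + j) ^ 2 =
      p * (1 - p) / (1 + p * ((k : ℝ) + j - 2))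
        - p * (1 - p) / (1 + p * ((k : ℝ) + j - 1)) := by
    intro j
    have h2 := hpos j
    have h1 : 0 < 1 + p * ((k : ℝ) + j - 1) := by linarith
    have h0 : 0 < 1 - p := by linarith
    unfold aCoeff
    push_cast
    rw [mul_pow, Real.sq_sqrt (by positivity), div_pow]
    have e2 := h2.ne'
    have e1 := h1.ne'
    rw [div_sub_div _ _ e2 e1, div_mul_div_comm, div_eq_div_iff (by positivity) (by positivity)]
    ring
  rw [hasSum_iff_tendsto_nat_of_nonneg (fun j => sq_nonneg _)]
  have hsum : ∀ n : ℕ, ∑ j ∈ Finset.range n, aCoeff p (k + j) ^ 2 =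
      p * (1 - p) / (1 + p * ((k : ℝ) - 2))
        - p * (1 - p) / (1 + p * ((k : ℝ) + n - 2)) := by
    intro n
    induction n with
    | zero => simp
    | succ n ih =>
      rw [Finset.sum_range_succ, ih, hterm]
      push_cast
      rw [show (k : ℝ) + (n + 1) - 2 = k + n - 1 by ring]
      ring
  simp_rw [hsum]
  have hlim : Filter.Tendsto (fun n : ℕ => p * (1 - p) / (1 + p * ((k : ℝ) + n - 2)))
      Filter.atTop (nhds 0) := by
    apply Filter.Tendsto.const_div_atTop
    have h := Filter.tendsto_atTop_add_const_left Filter.atTop (1 + p * ((k : ℝ) - 2))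
      ((tendsto_natCast_atTop_atTop (R := ℝ)).const_mul_atTop hp1)
    refine h.congr (fun n => ?_)
    ring
  simpa using hlim.const_sub (p * (1 - p) / (1 + p * ((k : ℝ) - 2)))
end
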